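/- Let r and n be integers with 2 ≤ r < n, and let f : F → 𝔽₂ be defined by f(x) = tr(x^{2^{r+1} − 1}). Then nl_r(f) ≥ 2^{n−1} − 2^{(1 − 2^{−r})·n + r/2^{r−1} − 1} − Σ_{j=1}^{r−1} j · 2^{((2^j − 1)/2^r)·n − ((2^j − 1)/2^{r−1})·r − (j+1)}. -/

import Mathlib

noncomputable section

/-- `Fq n` is the finite field with `2 ^ n` elements. -/
abbrev Fq (n : ℕ) : Type := GaloisField 2 n

/-- The absolute trace map `tr x = x + x^2 + x^4 + ⋯ + x^(2^(n-1))` from `Fq n` to `𝔽₂`. -/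
def tr {n : ℕ} (x : Fq n) : ZMod 2 := Algebra.trace (ZMod 2) (Fq n) x

/-- The derivative of `f` with respect to `a`. -/
def der {n : ℕ} (f : Fq n → ZMod 2) (a : Fq n) : Fq n → ZMod 2 :=
  fun x => f x + f (x + a)

/-- Iterated derivatives along a list of directions (head applied last/outermost). -/
def derIter {n : ℕ} (f : Fq n → ZMod 2) : List (Fq n) → (Fq n → ZMod 2)
  | [] => f
  | a :: as => der (derIter f as) a

/-- `g` has algebraic degree at most `r`: all `(r+1)`-th order derivatives vanish. -/
def degLE {n : ℕ} (g : Fq n → ZMod 2) (r : ℕ) : Prop :=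
  ∀ l : List (Fq n), l.length = r + 1 → derIter g l = fun _ => 0

/-- Hamming distance between two Boolean functions on `Fq n`. -/
def hdist {n : ℕ} (f g : Fq n → ZMod 2) : ℕ :=
  {x : Fq n | f x ≠ g x}.ncard

/-- The `r`-th order nonlinearity of `f`. -/
def nl {n : ℕ} (r : ℕ) (f : Fq n → ZMod 2) : ℕ :=
  sInf {d : ℕ | ∃ g : Fq n → ZMod 2, degLE g r ∧ d = hdist f g}

/-- The linear kernel of `f`: directions along which the derivative is constant. -/
def linKer {n : ℕ} (f : Fq n → ZMod 2) : Set (Fq n) :=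
  {b | ∃ c : ZMod 2, ∀ x, der f b x = c}

/-- The weight of a Boolean function on `Fq n`. -/
def wt {n : ℕ} (f : Fq n → ZMod 2) : ℕ := {x : Fq n | f x = 1}.ncard

/-!
Let `h = f + g` with `g` of degree at most `r`, and let `D` be the order of the field. Applying
Cauchy-Schwarz `r` times bounds `|bias h| ^ 2 ^ r` by the average of `|bias (D_l h)|` over all
`r`-tuples `l` of directions. The derivative of `x ^ (2 ^ k - 1)` along `k` directions is the
constant given by their Moore determinant, so `D_l h` is affine and its bias is `0` or `±1`: the
average is the proportion of `l` such that `tr (mooreDet (c :: l)) = 0` for all `c`.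

Write `l = b :: l'`, `d = mooreDet l'` and `q = spanPoly l'`. The condition reads
`tr ((d * m + d ^ 2 * m ^ 4) * q c ^ 2) = 0` for all `c`, where `m = q b`. As `q` is additive with
kernel of order at most `2 ^ (r - 1)`, this leaves at most `4 ^ (r - 1) * κ` values of `b`, where
`κ` counts the roots of `d * m + d ^ 2 * m ^ 4`. If `d ≠ 0` then `κ ≤ 4`, whence the proportion
`4 ^ r / D`. The tuples with `d = 0` are compensated by the many `d` for which `d⁻¹` is not the cube
of two different elements, where `κ ≤ 2`.
-/

section IteratedDerivative

variable {M N G H : Type*} [AddCommMonoid M] [AddCommMonoid N] [AddCommGroup G] [AddCommGroup H]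

lemma foldr_fwdDiff_add (l : List M) (f g : M → G) :
    l.foldr fwdDiff (f + g) = l.foldr fwdDiff f + l.foldr fwdDiff g := by
  induction l with
  | nil => rfl
  | cons a l ih => simp only [List.foldr_cons, ih, fwdDiff_add]

lemma foldr_fwdDiff_zero (l : List M) : l.foldr fwdDiff (0 : M → G) = 0 := by
  simpa using foldr_fwdDiff_add l (0 : M → G) 0

lemma foldr_fwdDiff_addMonoidHom_comp (T : G →+ H) (l : List M) (f : M → G) :
    l.foldr fwdDiff (T ∘ f) = T ∘ l.foldr fwdDiff f := by
  induction l with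
  | nil => rfl
  | cons a l ih => ext x; simp [ih, fwdDiff]

lemma foldr_fwdDiff_comp_addMonoidHom (φ : M →+ N) (l : List M) (f : N → G) :
    l.foldr fwdDiff (f ∘ φ) = (l.map φ).foldr fwdDiff f ∘ φ := by
  induction l with
  | nil => rfl
  | cons a l ih => ext x; simp [ih, fwdDiff]

end IteratedDerivative

section MooreDet

variable {R : Type*} [CommRing R] [CharP R 2]

/-- The linearized polynomial `y ↦ ∏ s ⊆ l, (y + ∑ s)`, whose roots are the `𝔽₂`-span of `l`,
obtained from `q = spanPoly l` by `spanPoly (a :: l) y = q y * q (y + a)`. -/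
def spanPoly : List R → R →+ R
  | [] => .id R
  | a :: l => ((frobenius R 2 : R →+ R) + AddMonoidHom.mulLeft (spanPoly l a)).comp (spanPoly l)

/-- The Moore determinant `det (aᵢ ^ 2 ^ j)` of a list over a ring of characteristic two, given by
its product formula. -/
def mooreDet : List R → R
  | [] => 1
  | a :: l => spanPoly l a * mooreDet l

lemma spanPoly_nil (y : R) : spanPoly [] y = y := rfl

lemma spanPoly_cons (a : R) (l : List R) (y : R) :
    spanPoly (a :: l) y = spanPoly l y ^ 2 + spanPoly l a * spanPoly l y := rfl

lemma mooreDet_cons (a : R) (l : List R) : mooreDet (a :: l) = spanPoly l a * mooreDet l := rfl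

lemma spanPoly_append_singleton (l : List R) (a y : R) :
    spanPoly (l ++ [a]) y = spanPoly (l.map (spanPoly [a])) (spanPoly [a] y) := by
  induction l generalizing y with
  | nil => rfl
  | cons b l ih => simp only [List.cons_append, List.map_cons, spanPoly_cons _ (l ++ [a]),
      spanPoly_cons _ (l.map _), ih]

lemma mooreDet_append_singleton (l : List R) (a : R) :
    mooreDet (l ++ [a]) = a * mooreDet (l.map (spanPoly [a])) := by
  induction l with
  | nil => rfl
  | cons b l ih =>
    simp only [List.cons_append, List.map_cons, mooreDet_cons, ih, spanPoly_append_singleton]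
    ring

lemma fwdDiff_pow_two_pow_succ_sub_one (k : ℕ) (a x : R) :
    fwdDiff a (fun y : R => y ^ (2 ^ (k + 1) - 1)) x =
      a ^ 2 ^ k * fwdDiff a (fun y : R => y ^ (2 ^ k - 1)) x
        + a * spanPoly [a] x ^ (2 ^ k - 1) := by
  have hpow (y : R) : y ^ 2 ^ k = y * y ^ (2 ^ k - 1) :=
    (mul_pow_sub_one (by positivity) y).symm
  have hpow_succ (y : R) : y ^ (2 ^ (k + 1) - 1) = y ^ 2 ^ k * y ^ (2 ^ k - 1) := by
    rw [← pow_add, pow_succ]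
    congr 1
    have := Nat.one_le_two_pow (n := k)
    omega
  have hfrob : (x + a) * (x + a) ^ (2 ^ k - 1) = x * x ^ (2 ^ k - 1) + a ^ 2 ^ k := by
    rw [← hpow, ← hpow, add_pow_char_pow]
  have hspan : spanPoly [a] x = x * (x + a) := by
    rw [spanPoly_cons, spanPoly_nil, spanPoly_nil]
    ring
  simp only [fwdDiff, hpow_succ, hspan, mul_pow, hpow x, hpow (x + a), CharTwo.sub_eq_add]
  linear_combination ((x + a) ^ (2 ^ k - 1) - x ^ (2 ^ k - 1)) * hfrob
    + x ^ (2 ^ k - 1) * (x * (x + a) ^ (2 ^ k - 1) - a ^ 2 ^ k) * CharTwo.two_eq_zero (R := R)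

theorem foldr_fwdDiff_pow_two_pow_sub_one (l : List R) (x : R) :
    l.foldr fwdDiff (fun y : R => y ^ (2 ^ l.length - 1)) x = mooreDet l := by
  obtain ⟨k, hk⟩ : ∃ k, l.length = k := ⟨_, rfl⟩
  rw [hk]
  induction k generalizing l x with
  | zero => simp [List.length_eq_zero_iff.1 hk, mooreDet]
  | succ k ih =>
    have hvanish : l.foldr fwdDiff (fun y : R => y ^ (2 ^ k - 1)) = 0 := by
      obtain ⟨b, t, rfl⟩ := List.exists_cons_of_length_eq_add_one hk
      ext y
      simp [fwdDiff, ih t _ (by simpa using hk)]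
    obtain ⟨l, a, rfl⟩ := List.eq_nil_or_concat' l |>.resolve_left (by rintro rfl; simp at hk)
    have hstep : fwdDiff a (fun y : R => y ^ (2 ^ (k + 1) - 1)) =
        AddMonoidHom.mulLeft (a ^ 2 ^ k) ∘ fwdDiff a (fun y : R => y ^ (2 ^ k - 1)) +
          AddMonoidHom.mulLeft a ∘ ((fun y : R => y ^ (2 ^ k - 1)) ∘ spanPoly [a]) :=
      funext (fwdDiff_pow_two_pow_succ_sub_one k a)
    rw [List.foldr_append] at hvanish ⊢
    simp only [List.foldr_cons, List.foldr_nil] at hvanish ⊢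
    rw [hstep, foldr_fwdDiff_add, foldr_fwdDiff_addMonoidHom_comp, foldr_fwdDiff_addMonoidHom_comp,
      foldr_fwdDiff_comp_addMonoidHom, hvanish]
    simp [mooreDet_append_singleton, ih (l.map _) _ (by simpa using hk)]

end MooreDet

section Bias

open Finset
open scoped BigOperators

/-- The nontrivial additive character `z ↦ (-1) ^ z` of `𝔽₂`. -/
def signChar : AddChar (ZMod 2) ℝ := AddChar.zmodChar 2 (neg_one_sq : (-1 : ℝ) ^ 2 = 1)

lemma signChar_apply (z : ZMod 2) : signChar z = if z = 0 then 1 else -1 := by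
  obtain rfl | rfl : z = 0 ∨ z = 1 := by decide +revert
  · simp
  · simp [signChar, AddChar.zmodChar_apply, ZMod.val_one]

lemma signChar_eq_one_iff {z : ZMod 2} : signChar z = 1 ↔ z = 0 := by
  rw [signChar_apply]
  split_ifs with hz <;> norm_num [hz]

lemma abs_signChar (z : ZMod 2) : |signChar z| = 1 := by
  rw [signChar_apply]
  split_ifs <;> simp

lemma signChar_add (z w : ZMod 2) : signChar (z + w) = signChar z * signChar w :=
  AddChar.map_add_eq_mul _ z w

lemma signChar_sub (z w : ZMod 2) : signChar (z - w) = signChar z * signChar w := by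
  rw [CharTwo.sub_eq_add, signChar_add]

variable {A : Type*} [Fintype A]

/-- The bias (normalized Walsh coefficient at zero) of a Boolean function on a finite type. -/
def bias (h : A → ZMod 2) : ℝ := 𝔼 x, signChar (h x)

lemma abs_bias_le_one (h : A → ZMod 2) : |bias h| ≤ 1 := by
  refine (abs_expect_le _ _).trans ?_
  simp only [abs_signChar]
  rcases isEmpty_or_nonempty A with hA | hA
  · simp
  · exact (Fintype.expect_one ..).le

lemma ncard_setOf_ne (f g : A → ZMod 2) :
    ({x | f x ≠ g x}.ncard : ℝ) = Fintype.card A / 2 * (1 - bias fun x => f x + g x) := by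
  classical
  have hsum : ∑ x, signChar (f x + g x) = Fintype.card A - 2 * #{x | f x ≠ g x} := by
    have hterm (x : A) : signChar (f x + g x) = 1 - 2 * if f x ≠ g x then 1 else 0 := by
      by_cases hx : f x = g x <;> norm_num [signChar_apply, CharTwo.add_eq_zero, hx]
    simp only [hterm, sum_sub_distrib, ← mul_sum, sum_boole, sum_const, card_univ, nsmul_one]
  have hmul : (Fintype.card A : ℝ) * bias (fun x => f x + g x) = _ :=
    (Fintype.card_mul_expect _).trans hsum
  rw [Set.ncard_eq_toFinset_card', Set.toFinset_ofPred]
  linarith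

lemma expect_boole {ι : Type*} [Fintype ι] (p : ι → Prop) [DecidablePred p] :
    𝔼 i, (if p i then (1 : ℝ) else 0) = #{i | p i} / Fintype.card ι := by
  rw [Fintype.expect_eq_sum_div_card, sum_boole]

lemma expect_ofFn_succ (k : ℕ) (P : List A → ℝ) :
    𝔼 v : Fin (k + 1) → A, P (List.ofFn v) =
      𝔼 v : Fin k → A, 𝔼 a, P (a :: List.ofFn v) := by
  rw [expect_comm, ← expect_product', univ_product_univ]
  exact (Fintype.expect_equiv (Fin.consEquiv fun _ => A) _ _ fun p => by
    simp [Fin.consEquiv, List.ofFn_succ]).symm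

variable [AddCommGroup A]

lemma bias_sq (h : A → ZMod 2) : bias h ^ 2 = 𝔼 a, bias (fwdDiff a h) := by
  calc bias h ^ 2 = 𝔼 x, 𝔼 y, signChar (h y) * signChar (h x) := by
        rw [sq, bias, Fintype.expect_mul_expect]
        simp only [mul_comm]
    _ = 𝔼 x, 𝔼 a, signChar (h (x + a)) * signChar (h x) :=
        expect_congr rfl fun x _ =>
          (Fintype.expect_equiv (Equiv.addLeft x) _ _ fun _ => rfl).symm
    _ = 𝔼 a, bias (fwdDiff a h) := by
        rw [expect_comm]
        simp only [bias, fwdDiff, signChar_sub]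

theorem abs_bias_pow_two_pow_le (h : A → ZMod 2) (k : ℕ) :
    |bias h| ^ 2 ^ k ≤ 𝔼 v : Fin k → A, |bias ((List.ofFn v).foldr fwdDiff h)| := by
  induction k with
  | zero => simp
  | succ k ih =>
    calc |bias h| ^ 2 ^ (k + 1)
        ≤ (𝔼 v : Fin k → A, |bias ((List.ofFn v).foldr fwdDiff h)|) ^ 2 := by
          rw [pow_succ, pow_mul]
          gcongr
      _ ≤ 𝔼 v : Fin k → A, |bias ((List.ofFn v).foldr fwdDiff h)| ^ 2 := by
          simpa using expect_mul_sq_le_sq_mul_sq univ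
            (fun v : Fin k → A => |bias ((List.ofFn v).foldr fwdDiff h)|) fun _ => 1
      _ = 𝔼 v : Fin k → A, 𝔼 a, bias ((a :: List.ofFn v).foldr fwdDiff h) := by
          simp only [sq_abs, bias_sq, List.foldr_cons]
      _ ≤ 𝔼 v : Fin k → A, 𝔼 a, |bias ((a :: List.ofFn v).foldr fwdDiff h)| := by
          gcongr
          exact le_abs_self _
      _ = _ := (expect_ofFn_succ k fun l => |bias (l.foldr fwdDiff h)|).symm

lemma abs_bias_of_fwdDiff_eq {u : A → ZMod 2} {φ : A →+ ZMod 2}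
    (hu : ∀ c x, fwdDiff c u x = φ c) [Decidable (∀ c, φ c = 0)] :
    |bias u| = if ∀ c, φ c = 0 then 1 else 0 := by
  classical
  have hu_eq (x : A) : u x = u 0 + φ x := by
    rw [← hu x 0, fwdDiff, zero_add, add_sub_cancel]
  have htrivial : signChar.compAddMonoidHom φ = 0 ↔ ∀ c, φ c = 0 := by
    simp only [DFunLike.ext_iff, AddChar.compAddMonoidHom_apply, AddChar.zero_apply,
      signChar_eq_one_iff]
  have hbias : bias u = signChar (u 0) * 𝔼 x, signChar.compAddMonoidHom φ x := by
    rw [bias, mul_expect]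
    refine expect_congr rfl fun x _ => ?_
    rw [hu_eq x, signChar_add, AddChar.compAddMonoidHom_apply]
  rw [hbias, abs_mul, abs_signChar, AddChar.expect_eq_ite, one_mul]
  simp only [htrivial]
  split_ifs <;> simp

end Bias

section Counting

open Finset
open scoped BigOperators

lemma card_filter_map_mem_le {A B : Type*} [AddGroup A] [Fintype A] [AddGroup B] [DecidableEq B]
    (φ : A →+ B) (Z : Finset B) : #{x | φ x ∈ Z} ≤ #{x | φ x = 0} * #Z := by
  refine card_le_mul_card_image_of_maps_to (f := φ) (fun x hx => (mem_filter.1 hx).2) _ ?_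
  intro b _
  refine (card_le_card (filter_subset_filter _ (subset_univ _))).trans ?_
  by_cases hb : b ∈ Set.range φ
  · exact (AddMonoidHom.card_fiber_eq_of_mem_range φ hb ⟨0, map_zero φ⟩).le
  · rw [filter_false_of_mem fun x _ hx => hb ⟨x, hx⟩]
    exact Nat.zero_le _

lemma card_spanPoly_eq_zero_le {R : Type*} [CommRing R] [IsDomain R] [CharP R 2] [Fintype R]
    [DecidableEq R] (l : List R) : #{y | spanPoly l y = 0} ≤ 2 ^ l.length := by
  induction l with
  | nil =>
    exact card_le_one.2 fun y hy z hz => (mem_filter.1 hy).2.trans (mem_filter.1 hz).2.symm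
  | cons a l ih =>
    have hroot (y : R) :
        spanPoly (a :: l) y = 0 ↔ spanPoly l y ∈ ({0, spanPoly l a} : Finset R) := by
      rw [spanPoly_cons, sq, ← add_mul, mul_eq_zero, CharTwo.add_eq_zero, mem_insert,
        mem_singleton, or_comm]
    calc #{y | spanPoly (a :: l) y = 0}
        = #{y | spanPoly l y ∈ ({0, spanPoly l a} : Finset R)} := by simp only [hroot]
      _ ≤ #{y | spanPoly l y = 0} * #{0, spanPoly l a} := card_filter_map_mem_le _ _
      _ ≤ 2 ^ l.length * 2 := Nat.mul_le_mul ih card_le_two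
      _ = 2 ^ (a :: l).length := by rw [List.length_cons, pow_succ]

lemma expect_mooreDet_eq_zero_le {R : Type*} [CommRing R] [IsDomain R] [CharP R 2] [Fintype R]
    [DecidableEq R] (k : ℕ) :
    𝔼 v : Fin k → R, (if mooreDet (List.ofFn v) = 0 then (1 : ℝ) else 0) ≤
      (2 ^ k - 1) / Fintype.card R := by
  induction k with
  | zero => simp [mooreDet]
  | succ k ih =>
    have hstep (v : Fin k → R) :
        𝔼 a, (if mooreDet (a :: List.ofFn v) = 0 then (1 : ℝ) else 0) ≤
          (if mooreDet (List.ofFn v) = 0 then 1 else 0) + 2 ^ k / Fintype.card R := by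
      by_cases hv : mooreDet (List.ofFn v) = 0
      · simp only [mooreDet_cons, hv, mul_zero, if_true, Fintype.expect_one]
        exact le_add_of_nonneg_right (by positivity)
      · simp only [mooreDet_cons, mul_eq_zero, hv, or_false, if_false, zero_add, expect_boole]
        gcongr
        exact_mod_cast (card_spanPoly_eq_zero_le _).trans_eq (by rw [List.length_ofFn])
    calc 𝔼 v : Fin (k + 1) → R, (if mooreDet (List.ofFn v) = 0 then (1 : ℝ) else 0)
        = 𝔼 v : Fin k → R, 𝔼 a, if mooreDet (a :: List.ofFn v) = 0 then (1 : ℝ) else 0 :=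
          expect_ofFn_succ k fun l => if mooreDet l = 0 then (1 : ℝ) else 0
      _ ≤ 𝔼 v : Fin k → R, ((if mooreDet (List.ofFn v) = 0 then (1 : ℝ) else 0)
            + 2 ^ k / Fintype.card R) := expect_le_expect fun v _ => hstep v
      _ ≤ (2 ^ k - 1) / Fintype.card R + 2 ^ k / Fintype.card R := by
          rw [expect_add_distrib, Fintype.expect_const]
          gcongr
      _ = (2 ^ (k + 1) - 1) / Fintype.card R := by ring

lemma card_annihilator_eq_card_ker {F R : Type*} [CommRing F] [Fintype F] [DecidableEq F]
    [CommRing R] [IsDomain R] [CharZero R] [DecidableEq R] {ψ : AddChar F R} (hψ : ψ.IsPrimitive)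
    (A : F →+ F) : #{z | ∀ c, ψ (z * A c) = 1} = #{c | A c = 0} := by
  classical
  have hrow (z : F) : ∑ c, ψ (z * A c) =
      if ∀ c, ψ (z * A c) = 1 then (Fintype.card F : R) else 0 := by
    have h := AddChar.sum_eq_ite ((ψ.mulShift z).compAddMonoidHom A)
    simpa only [DFunLike.ext_iff, AddChar.compAddMonoidHom_apply, AddChar.mulShift_apply,
      AddChar.zero_apply] using h
  have hcol (c : F) : ∑ z, ψ (z * A c) = if A c = 0 then (Fintype.card F : R) else 0 := by
    simpa only [Nat.cast_ite, Nat.cast_zero] using AddChar.sum_mulShift (A c) hψ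
  have hswap : ∑ z, ∑ c, ψ (z * A c) = ∑ c, ∑ z, ψ (z * A c) := sum_comm
  simp only [hrow, hcol, ← sum_filter, sum_const, nsmul_eq_mul] at hswap
  exact_mod_cast mul_right_cancel₀ (Nat.cast_ne_zero.2 Fintype.card_ne_zero) hswap

lemma card_pairs_map_snd_eq_le {A B : Type*} [AddGroup A] [Fintype A] [AddGroup B] [DecidableEq A]
    [DecidableEq B] (L : A →+ B) (g : A → B) (T : Finset A) :
    #{p : A × A | p.1 ∈ T ∧ L p.2 = g p.1} ≤ #{x | L x = 0} * #T := by
  refine card_le_mul_card_image_of_maps_to (f := Prod.fst) (fun p hp => (mem_filter.1 hp).2.1) _ ?_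
  intro x _
  calc #{p ∈ ({p | p.1 ∈ T ∧ L p.2 = g p.1} : Finset (A × A)) | p.1 = x}
      ≤ #{y | L y ∈ ({g x} : Finset B)} := by
        refine card_le_card_of_injOn Prod.snd ?_ ?_
        · intro p hp
          simp_all
        · intro p hp q hq hpq
          simp_all [Prod.ext_iff]
    _ ≤ #{x | L x = 0} := by simpa using card_filter_map_mem_le L {g x}

variable {F : Type*} [Field F] [Fintype F] [DecidableEq F]

lemma card_le_card_pairs_map_eq_mul (L : F →+ F) (ρ : F) :
    Fintype.card F ≤ #{p : F × F | L p.2 = ρ * L p.1} := by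
  let φ : F × F →+ F :=
    L.comp (.snd F F) - (AddMonoidHom.mulLeft ρ).comp (L.comp (.fst F F))
  have hφ (p : F × F) : φ p = 0 ↔ L p.2 = ρ * L p.1 := sub_eq_zero
  have h := card_filter_map_mem_le φ univ
  simp only [mem_univ, filter_true, card_univ, Fintype.card_prod, hφ] at h
  exact Nat.le_of_mul_le_mul_right h Fintype.card_pos

lemma card_le_of_forall_mem_or_mul_mem (L : F →+ F) (S : Set F) [DecidablePred (· ∈ S)] {ρ : F}
    (hρ : ρ ≠ 0) (hS : ∀ d ≠ 0, d ∈ S ∨ ρ * d ∈ S) :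
    Fintype.card F ≤ #{x | L x = 0} ^ 2 + 2 * #{x | L x = 0} * #{y | L y ≠ 0 ∧ L y ∈ S} := by
  set K : Finset F := {x | L x = 0} with hK
  set T : Finset F := {y | L y ≠ 0 ∧ L y ∈ S} with hT
  have hsubset : ({p | L p.2 = ρ * L p.1} : Finset (F × F)) ⊆
      K ×ˢ K ∪ ({p | p.1 ∈ T ∧ L p.2 = ρ * L p.1} : Finset (F × F)) ∪
        ({p : F × F | p.1 ∈ T ∧ L p.2 = ρ⁻¹ * L p.1} : Finset (F × F)).map
          (Equiv.prodComm F F).toEmbedding := by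
    rintro ⟨x, y⟩ hxy
    replace hxy : L y = ρ * L x := (mem_filter.1 hxy).2
    have hyx : L x = ρ⁻¹ * L y := by rw [hxy, inv_mul_cancel_left₀ hρ]
    by_cases hx : L x = 0
    · simp [hK, hxy, hx]
    · have hy : L y ≠ 0 := hxy ▸ mul_ne_zero hρ hx
      rcases hS (L x) hx with hmem | hmem
      · simp [hT, hxy, hx, hmem]
      · simp [hT, hy, hyx, hxy ▸ hmem]
  calc Fintype.card F ≤ #{p : F × F | L p.2 = ρ * L p.1} := card_le_card_pairs_map_eq_mul L ρ
    _ ≤ #K * #K + #K * #T + #K * #T := by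
      refine (card_le_card hsubset).trans <| (card_union_le _ _).trans ?_
      refine add_le_add ((card_union_le _ _).trans ?_) ?_
      · rw [card_product]
        exact Nat.add_le_add_left (card_pairs_map_snd_eq_le L (ρ * L ·) T) _
      · rw [card_map]
        exact card_pairs_map_snd_eq_le L (ρ⁻¹ * L ·) T
    _ = #K ^ 2 + 2 * #K * #T := by ring

end Counting

section Radical

open Finset

variable {F : Type*} [Field F] [CharP F 2]

/-- The additive map `m ↦ d * m + d ^ 2 * m ^ 4`. By invariance of the trace under squaring,
`tr (d * m * q ^ 2 + d * m ^ 2 * q) = tr (radicalMap d m * q ^ 2)`. -/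
def radicalMap (d : F) : F →+ F :=
  .mulLeft d + (AddMonoidHom.mulLeft (d ^ 2)).comp (iterateFrobenius F 2 2 : F →+ F)

lemma radicalMap_apply (d m : F) : radicalMap d m = d * m + d ^ 2 * m ^ 4 := rfl

lemma radicalMap_eq_zero_iff {d m : F} (hd : d ≠ 0) :
    radicalMap d m = 0 ↔ m = 0 ∨ d * m ^ 3 = 1 := by
  have hfactor : radicalMap d m = d * m * (1 + d * m ^ 3) := by
    rw [radicalMap_apply]
    ring
  rw [hfactor, mul_eq_zero, mul_eq_zero, or_iff_right hd, CharTwo.add_eq_zero, eq_comm (a := 1)]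

variable [Fintype F] [DecidableEq F]

lemma card_radicalMap_eq_zero_le_four {d : F} (hd : d ≠ 0) : #{m | radicalMap d m = 0} ≤ 4 := by
  have hsubset : ({m | radicalMap d m = 0} : Finset F) ⊆
      insert 0 (Polynomial.nthRoots 3 d⁻¹).toFinset := by
    intro m hm
    have hm := (radicalMap_eq_zero_iff hd).1 (mem_filter.1 hm).2
    rw [mem_insert, Multiset.mem_toFinset, Polynomial.mem_nthRoots three_pos]
    exact hm.imp_right eq_inv_of_mul_eq_one_right
  refine (card_le_card hsubset).trans <| (card_insert_le _ _).trans ?_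
  exact Nat.succ_le_succ ((Multiset.toFinset_card_le _).trans (Polynomial.card_nthRoots 3 _))

lemma exists_ne_of_two_lt_card_radicalMap_eq_zero {d : F} (hd : d ≠ 0)
    (h : 2 < #{m | radicalMap d m = 0}) :
    ∃ m m' : F, m ≠ m' ∧ d * m ^ 3 = 1 ∧ d * m' ^ 3 = 1 := by
  have hcard : 1 < #(({m | radicalMap d m = 0} : Finset F).erase 0) :=
    (Nat.lt_sub_of_add_lt h).trans_le pred_card_le_card_erase
  obtain ⟨m, hm, m', hm', hne⟩ := one_lt_card.1 hcard
  have hcube {z : F} (hz : z ∈ ({m | radicalMap d m = 0} : Finset F).erase 0) :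
      d * z ^ 3 = 1 :=
    ((radicalMap_eq_zero_iff hd).1 (mem_filter.1 (mem_of_mem_erase hz)).2).resolve_left
      (ne_of_mem_erase hz)
  exact ⟨m, m', hne, hcube hm, hcube hm'⟩

lemma exists_forall_card_radicalMap_eq_zero_le_two (F : Type*) [Field F] [CharP F 2] [Fintype F]
    [DecidableEq F] : ∃ ρ : F, ρ ≠ 0 ∧ ∀ d ≠ 0,
      #{m | radicalMap d m = 0} ≤ 2 ∨ #{m | radicalMap (ρ * d) m = 0} ≤ 2 := by
  by_cases hinj : Function.Injective fun m : F => m ^ 3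
  · refine ⟨1, one_ne_zero, fun d hd => .inl <| not_lt.1 fun h => ?_⟩
    obtain ⟨m, m', hne, hm, hm'⟩ := exists_ne_of_two_lt_card_radicalMap_eq_zero hd h
    exact hne (hinj (mul_left_cancel₀ hd (hm.trans hm'.symm)))
  · -- If `ρ` is not a cube then `d⁻¹` and `(ρ * d)⁻¹` cannot both be cubes.
    obtain ⟨ρ, hρ⟩ : ∃ ρ, ∀ m : F, m ^ 3 ≠ ρ := by
      simpa [Finite.injective_iff_surjective, Function.Surjective] using hinj
    have hρ0 : ρ ≠ 0 := fun h => hρ 0 (by simp [h])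
    refine ⟨ρ, hρ0, fun d hd => ?_⟩
    by_contra! ⟨h, h'⟩
    obtain ⟨m, -, -, hm, -⟩ := exists_ne_of_two_lt_card_radicalMap_eq_zero hd h
    obtain ⟨m', -, -, hm', -⟩ :=
      exists_ne_of_two_lt_card_radicalMap_eq_zero (mul_ne_zero hρ0 hd) h'
    have hm'0 : m' ≠ 0 := by
      rintro rfl
      simp at hm'
    apply hρ (m / m')
    rw [div_pow, div_eq_iff (pow_ne_zero 3 hm'0)]
    apply mul_left_cancel₀ hd
    linear_combination hm - hm'

lemma card_le_add_card_mooreDet_cons {l : List F} (hl : mooreDet l ≠ 0) :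
    Fintype.card F ≤ (2 ^ l.length) ^ 2 + 2 * 2 ^ l.length *
      #{y | mooreDet (y :: l) ≠ 0 ∧ #{m | radicalMap (mooreDet (y :: l)) m = 0} ≤ 2} := by
  let L : F →+ F := (AddMonoidHom.mulRight (mooreDet l)).comp (spanPoly l)
  have hL (y : F) : L y = mooreDet (y :: l) := rfl
  obtain ⟨ρ, hρ, hS⟩ := exists_forall_card_radicalMap_eq_zero_le_two F
  have hcard := card_le_of_forall_mem_or_mul_mem L {d | #{m | radicalMap d m = 0} ≤ 2} hρ hS
  simp only [hL, Set.mem_ofPred_eq] at hcard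
  have hker : #{y | mooreDet (y :: l) = 0} ≤ 2 ^ l.length := by
    simpa only [mooreDet_cons, mul_eq_zero, hl, or_false] using card_spanPoly_eq_zero_le l
  exact hcard.trans (by gcongr)

end Radical

section Degenerate

variable (F : Type*) [Field F] [Algebra (ZMod 2) F]

/-- The canonical additive character `x ↦ (-1) ^ tr x` of a finite field of characteristic two. -/
def traceChar : AddChar F ℝ :=
  signChar.compAddMonoidHom (Algebra.trace (ZMod 2) F).toAddMonoidHom

variable {F}

lemma traceChar_eq_one_iff {x : F} : traceChar F x = 1 ↔ Algebra.trace (ZMod 2) F x = 0 :=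
  signChar_eq_one_iff

variable [Finite F]

lemma trace_sq (x : F) : Algebra.trace (ZMod 2) F (x ^ 2) = Algebra.trace (ZMod 2) F x := by
  have h := Algebra.trace_eq_of_algEquiv (FiniteField.frobeniusAlgEquivOfAlgebraic (ZMod 2) F) x
  rwa [FiniteField.coe_frobeniusAlgEquivOfAlgebraic, ZMod.card] at h

lemma isPrimitive_traceChar : (traceChar F).IsPrimitive := by
  intro a ha hψ
  refine ha ((traceForm_nondegenerate (ZMod 2) F).1 a fun x => ?_)
  rw [Algebra.traceForm_apply, ← traceChar_eq_one_iff, ← AddChar.mulShift_apply, hψ,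
    AddChar.one_apply]

variable [CharP F 2]

/-- The directions in `l` are degenerate if the derivative along `l` of
`x ↦ tr (x ^ (2 ^ (l.length + 1) - 1))`, an affine function, is constant. -/
def IsDegenerate (l : List F) : Prop :=
  ∀ c, Algebra.trace (ZMod 2) F (mooreDet (c :: l)) = 0

lemma isDegenerate_cons_iff (b : F) (l : List F) :
    IsDegenerate (b :: l) ↔
      ∀ c, traceChar F (radicalMap (mooreDet l) (spanPoly l b) * spanPoly l c ^ 2) = 1 := by
  refine forall_congr' fun c => ?_
  rw [traceChar_eq_one_iff]
  set d := mooreDet l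
  set m := spanPoly l b
  set q := spanPoly l c
  have hsplit : mooreDet (c :: b :: l) = d * m * q ^ 2 + d * m ^ 2 * q := by
    simp only [mooreDet_cons, spanPoly_cons]
    ring
  have hjoin : radicalMap d m * q ^ 2 = d * m * q ^ 2 + (d * m ^ 2 * q) ^ 2 := by
    rw [radicalMap_apply]
    ring
  rw [hsplit, hjoin, map_add, map_add, trace_sq (d * m ^ 2 * q)]

lemma not_isDegenerate_nil : ¬ IsDegenerate ([] : List F) := fun h =>
  Algebra.trace_ne_zero (ZMod 2) F <| LinearMap.ext fun c => by
    simpa only [mooreDet, spanPoly_nil, mul_one, LinearMap.zero_apply] using h c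

end Degenerate

section DegenerateCount

open Finset
open scoped BigOperators

variable {F : Type*} [Field F] [Fintype F] [CharP F 2] [Algebra (ZMod 2) F]

instance (l : List F) : Decidable (IsDegenerate l) :=
  inferInstanceAs (Decidable (∀ c, Algebra.trace (ZMod 2) F (mooreDet (c :: l)) = 0))

lemma card_isDegenerate_cons_le [DecidableEq F] (l : List F) :
    #{b | IsDegenerate (b :: l)} ≤ 4 ^ l.length * #{m | radicalMap (mooreDet l) m = 0} := by
  let A : F →+ F := (frobenius F 2 : F →+ F).comp (spanPoly l)
  let Z : Finset F := {z | ∀ c, traceChar F (z * A c) = 1}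
  have hA : ∀ c, A c = spanPoly l c ^ 2 := fun _ => rfl
  have hZ : #Z ≤ 2 ^ l.length := by
    rw [card_annihilator_eq_card_ker isPrimitive_traceChar A]
    simpa only [hA, sq_eq_zero_iff] using card_spanPoly_eq_zero_le l
  have hker : #{b | radicalMap (mooreDet l) (spanPoly l b) = 0} ≤
      2 ^ l.length * #{m | radicalMap (mooreDet l) m = 0} := by
    refine le_trans ?_ (Nat.mul_le_mul_right _ (card_spanPoly_eq_zero_le l))
    simpa only [mem_filter, mem_univ, true_and] using
      card_filter_map_mem_le (spanPoly l) {m | radicalMap (mooreDet l) m = 0}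
  calc #{b | IsDegenerate (b :: l)}
      = #{b | radicalMap (mooreDet l) (spanPoly l b) ∈ Z} := by
        simp only [isDegenerate_cons_iff, Z, mem_filter, mem_univ, true_and, hA]
    _ ≤ #{b | radicalMap (mooreDet l) (spanPoly l b) = 0} * #Z :=
        card_filter_map_mem_le ((radicalMap (mooreDet l)).comp (spanPoly l)) Z
    _ ≤ 2 ^ l.length * #{m | radicalMap (mooreDet l) m = 0} * 2 ^ l.length :=
        Nat.mul_le_mul hker hZ
    _ = 4 ^ l.length * #{m | radicalMap (mooreDet l) m = 0} := by
        rw [mul_right_comm, ← mul_pow]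
        norm_num

lemma sum_card_isDegenerate_add_le {l : List F} (hl : mooreDet l ≠ 0)
    (hcard : 4 ^ (l.length + 1) ≤ Fintype.card F) :
    ∑ y, #{b | IsDegenerate (b :: y :: l)} + 2 ^ (l.length + 1) * Fintype.card F ≤
      4 ^ (l.length + 2) * Fintype.card F := by
  classical
  set D := Fintype.card F
  set K := 2 ^ l.length with hK
  have hKsq : 4 ^ l.length = K ^ 2 := by
    rw [hK, ← pow_mul', pow_mul]
    norm_num
  rw [pow_succ, hKsq] at hcard
  rw [pow_succ 2, pow_add 4, hKsq, ← hK]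
  let T : Finset F :=
    {y | mooreDet (y :: l) ≠ 0 ∧ #{m | radicalMap (mooreDet (y :: l)) m = 0} ≤ 2}
  have hT : D ≤ K ^ 2 + 2 * K * #T := card_le_add_card_mooreDet_cons hl
  have hker : #{y | mooreDet (y :: l) = 0} ≤ K := by
    simpa only [mooreDet_cons, mul_eq_zero, hl, or_false] using card_spanPoly_eq_zero_le l
  have hpoint (y : F) : #{b | IsDegenerate (b :: y :: l)} + (if y ∈ T then 8 * K ^ 2 else 0) ≤
      (if mooreDet (y :: l) = 0 then D else 0) + 16 * K ^ 2 := by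
    have hle := card_isDegenerate_cons_le (y :: l)
    rw [List.length_cons, pow_succ, hKsq] at hle
    by_cases hy : mooreDet (y :: l) = 0
    · simpa [T, hy] using (card_le_univ _).trans (Nat.le_add_right _ _)
    by_cases hyT : y ∈ T
    · have htwo := hle.trans (Nat.mul_le_mul_left _ (mem_filter.1 hyT).2.2)
      rw [if_pos hyT, if_neg hy]
      lia
    · have hfour := hle.trans (Nat.mul_le_mul_left _ (card_radicalMap_eq_zero_le_four hy))
      rw [if_neg hyT, if_neg hy]
      lia
  have hsum := sum_le_sum fun y (_ : y ∈ univ) => hpoint y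
  simp only [sum_add_distrib, sum_ite_mem, univ_inter, ← sum_filter, sum_const, smul_eq_mul,
    card_univ] at hsum
  linarith [Nat.mul_le_mul_right D hker, Nat.mul_le_mul_left (4 * K) hT,
    Nat.mul_le_mul_left K hcard]

lemma expect_expect_isDegenerate_le [DecidableEq F] {l : List F}
    (hcard : 4 ^ (l.length + 1) ≤ Fintype.card F) :
    𝔼 y, 𝔼 b, (if IsDegenerate (b :: y :: l) then (1 : ℝ) else 0) ≤
      (if mooreDet l = 0 then 1 else 0) +
        (4 ^ (l.length + 2) - 2 ^ (l.length + 1)) / Fintype.card F := by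
  have hnonneg : (0 : ℝ) ≤ 4 ^ (l.length + 2) - 2 ^ (l.length + 1) :=
    sub_nonneg.2 <| (pow_le_pow_left₀ zero_le_two (by norm_num) _).trans
      (pow_le_pow_right₀ (by norm_num) (Nat.le_succ _))
  by_cases hl : mooreDet l = 0
  · rw [if_pos hl]
    refine le_add_of_le_of_nonneg ?_ (by positivity)
    exact expect_le univ_nonempty fun y _ => expect_le univ_nonempty fun b _ => by
      split_ifs <;> norm_num
  · have hsum : (∑ y, #{b | IsDegenerate (b :: y :: l)} : ℝ) + 2 ^ (l.length + 1) * Fintype.card F ≤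
        4 ^ (l.length + 2) * Fintype.card F := by
      exact_mod_cast sum_card_isDegenerate_add_le hl hcard
    simp only [expect_boole, if_neg hl, zero_add]
    rw [← expect_div, Fintype.expect_eq_sum_div_card]
    gcongr
    rw [div_le_iff₀ (by positivity)]
    linarith

theorem expect_isDegenerate_le {r : ℕ} (hcard : 4 ^ r ≤ Fintype.card F) :
    𝔼 v : Fin r → F, (if IsDegenerate (List.ofFn v) then (1 : ℝ) else 0) ≤
      4 ^ r / Fintype.card F := by
  classical
  let P (l : List F) : ℝ := if IsDegenerate l then 1 else 0
  match r with
  | 0 =>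
    simp only [List.ofFn_zero, not_isDegenerate_nil, if_false, expect_const_zero]
    positivity
  | 1 =>
    have h : #{b : F | IsDegenerate [b]} ≤ 4 := by
      simpa [mooreDet] using (card_isDegenerate_cons_le ([] : List F)).trans
        (Nat.mul_le_mul_left _ (card_radicalMap_eq_zero_le_four one_ne_zero))
    rw [expect_ofFn_succ 0 P]
    simp only [P, List.ofFn_zero, expect_boole, Fintype.expect_const, pow_one]
    gcongr
    exact_mod_cast h
  | k + 2 =>
    calc 𝔼 v : Fin (k + 2) → F, P (List.ofFn v)
        = 𝔼 v : Fin k → F, 𝔼 y, 𝔼 b, P (b :: y :: List.ofFn v) := by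
          rw [expect_ofFn_succ (k + 1) P, expect_ofFn_succ k fun l => 𝔼 b, P (b :: l)]
      _ ≤ 𝔼 v : Fin k → F, ((if mooreDet (List.ofFn v) = 0 then 1 else 0) +
            (4 ^ (k + 2) - 2 ^ (k + 1)) / (Fintype.card F : ℝ)) := by
          refine expect_le_expect fun v _ => ?_
          have h := expect_expect_isDegenerate_le (l := List.ofFn v) <| by
            rw [List.length_ofFn]
            exact (Nat.pow_le_pow_right four_pos (Nat.le_succ _)).trans hcard
          rwa [List.length_ofFn] at h
      _ ≤ (2 ^ k - 1) / Fintype.card F + (4 ^ (k + 2) - 2 ^ (k + 1)) / Fintype.card F := by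
          rw [expect_add_distrib, Fintype.expect_const]
          exact add_le_add_left (expect_mooreDet_eq_zero_le k) _
      _ ≤ 4 ^ (k + 2) / Fintype.card F := by
          rw [← add_div]
          gcongr
          have := pow_pos (two_pos (α := ℝ)) k
          rw [pow_succ 2 k]
          linarith

end DegenerateCount

section Distance

variable {F : Type*} [Field F] [Fintype F] [CharP F 2] [Algebra (ZMod 2) F]

lemma abs_bias_foldr_fwdDiff {g : F → ZMod 2} {l : List F}
    (hg : ∀ l' : List F, l'.length = l.length + 1 → l'.foldr fwdDiff g = 0) :
    |bias (l.foldr fwdDiff fun x =>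
        Algebra.trace (ZMod 2) F (x ^ (2 ^ (l.length + 1) - 1)) + g x)| =
      if IsDegenerate l then 1 else 0 := by
  let T : F →+ ZMod 2 := (Algebra.trace (ZMod 2) F).toAddMonoidHom
  let φ : F →+ ZMod 2 := T.comp ((AddMonoidHom.mulRight (mooreDet l)).comp (spanPoly l))
  refine (abs_bias_of_fwdDiff_eq (φ := φ) fun c x => ?_).trans (if_congr Iff.rfl rfl rfl)
  calc (c :: l).foldr fwdDiff (T ∘ (fun y : F => y ^ (2 ^ (l.length + 1) - 1)) + g) x
      = T ((c :: l).foldr fwdDiff (fun y : F => y ^ (2 ^ (c :: l).length - 1)) x) := by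
        rw [foldr_fwdDiff_add, foldr_fwdDiff_addMonoidHom_comp, hg (c :: l) rfl, add_zero]
        rfl
    _ = φ c := by
        rw [foldr_fwdDiff_pow_two_pow_sub_one]
        rfl

theorem abs_bias_trace_pow_add_pow_le {r : ℕ} {g : F → ZMod 2}
    (hg : ∀ l : List F, l.length = r + 1 → l.foldr fwdDiff g = 0) :
    |bias fun x => Algebra.trace (ZMod 2) F (x ^ (2 ^ (r + 1) - 1)) + g x| ^ 2 ^ r ≤
      4 ^ r / Fintype.card F := by
  by_cases hcard : 4 ^ r ≤ Fintype.card F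
  · refine (abs_bias_pow_two_pow_le _ r).trans <| le_of_eq_of_le ?_ (expect_isDegenerate_le hcard)
    refine Finset.expect_congr rfl fun v _ => ?_
    have h := abs_bias_foldr_fwdDiff (g := g) (l := List.ofFn v)
    rw [List.length_ofFn] at h
    exact h hg
  · refine (pow_le_one₀ (abs_nonneg _) (abs_bias_le_one _)).trans ?_
    rw [one_le_div (by positivity)]
    exact_mod_cast (not_le.1 hcard).le

theorem le_ncard_trace_pow_ne {r : ℕ} {g : F → ZMod 2}
    (hg : ∀ l : List F, l.length = r + 1 → l.foldr fwdDiff g = 0) :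
    (Fintype.card F / 2 * (1 - (4 ^ r / Fintype.card F) ^ ((2 ^ r : ℕ) : ℝ)⁻¹) : ℝ) ≤
      {x : F | Algebra.trace (ZMod 2) F (x ^ (2 ^ (r + 1) - 1)) ≠ g x}.ncard := by
  rw [ncard_setOf_ne]
  gcongr
  refine (le_abs_self _).trans ?_
  rw [← Real.pow_rpow_inv_natCast (abs_nonneg _) (Nat.two_pow_pos r).ne']
  gcongr
  exact abs_bias_trace_pow_add_pow_le hg

end Distance

section Nonlinearity

variable {n : ℕ}

lemma derIter_eq_foldr_fwdDiff (f : Fq n → ZMod 2) (l : List (Fq n)) :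
    derIter f l = l.foldr fwdDiff f := by
  induction l with
  | nil => rfl
  | cons a l ih =>
    ext x
    rw [derIter, ih, List.foldr_cons, fwdDiff, der, CharTwo.sub_eq_add, add_comm]

lemma exists_degLE_nl_eq_hdist (r : ℕ) (f : Fq n → ZMod 2) :
    ∃ g, degLE g r ∧ nl r f = hdist f g := by
  have hzero : degLE (0 : Fq n → ZMod 2) r := fun l _ =>
    (derIter_eq_foldr_fwdDiff 0 l).trans (foldr_fwdDiff_zero l)
  exact Nat.sInf_mem (s := {d | ∃ g, degLE g r ∧ d = hdist f g}) ⟨_, 0, hzero, rfl⟩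

theorem rth_order_nl_tr_general (n r : ℕ) (hn : n ≠ 0)
    (f : Fq n → ZMod 2) (hf : ∀ x, f x = tr (x ^ (2 ^ (r + 1) - 1))) :
    (nl r f : ℝ) ≥ (2 : ℝ) ^ ((n : ℝ) - 1)
      - (2 : ℝ) ^
        ((1 - (2 : ℝ) ^ (-(r : ℝ))) * (n : ℝ) + (r : ℝ) / (2 : ℝ) ^ ((r : ℝ) - 1) - 1) := by
  let _ : Fintype (Fq n) := Fintype.ofFinite _
  have hcard : (Fintype.card (Fq n) : ℝ) = 2 ^ (n : ℝ) := by
    rw [← Nat.card_eq_fintype_card, GaloisField.card 2 n hn, Real.rpow_natCast]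
    norm_cast
  have hroot : ((4 : ℝ) ^ r / 2 ^ (n : ℝ)) ^ ((2 ^ r : ℕ) : ℝ)⁻¹ =
      2 ^ ((2 * r - n) * (2 : ℝ) ^ (-(r : ℝ))) := by
    have hfour : (4 : ℝ) ^ r = 2 ^ (2 * r : ℝ) := by
      rw [Real.rpow_mul two_pos.le, Real.rpow_natCast]
      norm_num
    rw [hfour, ← Real.rpow_sub two_pos, ← Real.rpow_mul two_pos.le, Real.rpow_neg two_pos.le,
      Real.rpow_natCast, Nat.cast_pow, Nat.cast_two]
  have hexp : (1 - (2 : ℝ) ^ (-(r : ℝ))) * n + r / (2 : ℝ) ^ ((r : ℝ) - 1) - 1 =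
      n - 1 + (2 * r - n) * (2 : ℝ) ^ (-(r : ℝ)) := by
    rw [Real.rpow_neg two_pos.le, Real.rpow_sub_one two_ne_zero]
    field_simp
    ring
  obtain ⟨g, hg, hnl⟩ := exists_degLE_nl_eq_hdist r f
  have hdist_ge := le_ncard_trace_pow_ne (r := r) (g := g) fun l hl =>
    (derIter_eq_foldr_fwdDiff g l).symm.trans (hg l hl)
  rw [hcard, hroot, ← Real.rpow_sub_one two_ne_zero, mul_sub, mul_one, ← Real.rpow_add two_pos,
    ← hexp] at hdist_ge
  rwa [hnl, hdist, funext hf]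

end Nonlinearity

/-- `r`-th order nonlinearity lower bound for `tr(x^(2^(r+1)-1))`. -/
theorem rth_order_nl_tr (n r : ℕ) (hr : 2 ≤ r) (hrn : r < n)
    (f : Fq n → ZMod 2) (hf : ∀ x, f x = tr (x ^ (2 ^ (r + 1) - 1))) :
    (nl r f : ℝ) ≥ (2:ℝ) ^ ((n:ℝ) - 1)
      - (2:ℝ) ^ ((1 - (2:ℝ) ^ (-(r:ℝ))) * (n:ℝ) + (r:ℝ) / (2:ℝ) ^ ((r:ℝ) - 1) - 1)
      - ∑ j ∈ Finset.Icc 1 (r - 1), (j:ℝ) *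
          (2:ℝ) ^ (((2:ℝ) ^ (j:ℝ) - 1) / (2:ℝ) ^ (r:ℝ) * (n:ℝ)
            - ((2:ℝ) ^ (j:ℝ) - 1) / (2:ℝ) ^ ((r:ℝ) - 1) * (r:ℝ) - ((j:ℝ) + 1)) :=
  (sub_le_self _ (Finset.sum_nonneg fun j _ => by positivity)).trans
    (rth_order_nl_tr_general n r (by lia) f hf)
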